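/- arXiv:1509.02898 — 2 statements merged into one kernel-verified Lean document; each statement's English description precedes it below -/
import Mathlib

section
/- Let k, m be positive integers. The images in R(k,m) of the monomials x_1^{n_1}·x_2^{n_2}·…·x_k^{n_k} with 0 ≤ n_i ≤ m+k−i for each i = 1,…,k form a basis of R(k,m) as a vector space over ZMod 2. -/
/-!
With `j` the 0-indexed position of a variable and `N = m + k`, the generators of `flagIdeal k m`
are `g_j = h_{N-j}(x_0, …, x_j)`, `0 ≤ j < k`. As
`h_d(l, x) = ∑_{t ≤ d} x ^ t * h_{d-t}(l)` (`completeHomog_append_singleton`), `g_j` is monic of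
degree `N - j` in `x_j` with coefficients in the preceding variables. Hence adjoining
successively a root of `g_0, g_1, …, g_{k-1}` gives a tower of free extensions, and multiplying
the power bases `1, x_j, …, x_j ^ (N-j-1)` along the tower yields the monomial basis.

`exists_tower` constructs this tower as an algebra `T` together with its monomial basis and its
universal property. The map `FlagRing k m → T` shows that the monomials are independent
in `FlagRing k m`, and the map `T → FlagRing k m` provided by the universal property, being
surjective, shows that they span.
-/

open scoped TensorProduct

/-- Complete homogeneous symmetric polynomial of degree `d` in a list of elements
of a commutative (semi)ring: `h_d(l)`. -/
noncomputable def completeHomog {R : Type*} [CommSemiring R] : List R → ℕ → R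
  | [], 0 => 1
  | [], _ + 1 => 0
  | x :: l, d => ∑ t ∈ Finset.range (d + 1), x ^ t * completeHomog l (d - t)

/-- Elementary symmetric polynomial of degree `d` in a list of elements: `e_d(l)`. -/
noncomputable def elemSymm {R : Type*} [CommSemiring R] : List R → ℕ → R
  | _, 0 => 1
  | [], _ + 1 => 0
  | x :: l, d + 1 => elemSymm l (d + 1) + x * elemSymm l d

/-- The ideal of `(ZMod 2)[x_1, …, x_k]` generated by the complete homogeneous
symmetric polynomials `h_{m+i}(x_1, …, x_{k+1-i})` for `1 ≤ i ≤ k`. -/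
noncomputable def flagIdeal (k m : ℕ) : Ideal (MvPolynomial (Fin k) (ZMod 2)) :=
  Ideal.span { p | ∃ i : ℕ, 1 ≤ i ∧ i ≤ k ∧
    p = completeHomog (((List.finRange k).take (k + 1 - i)).map MvPolynomial.X) (m + i) }

/-- `R(k,m)`, the quotient of `(ZMod 2)[x_1, …, x_k]` by `flagIdeal k m`;
this is the mod-2 cohomology ring of the real flag manifold `F(1^k, m)`. -/
abbrev FlagRing (k m : ℕ) : Type :=
  MvPolynomial (Fin k) (ZMod 2) ⧸ flagIdeal k m

/-- The image of the variable `x_{j+1}` in `R(k,m)` (`j` is 0-indexed). -/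
noncomputable def xGen (k m : ℕ) (j : Fin k) : FlagRing k m :=
  Ideal.Quotient.mk (flagIdeal k m) (MvPolynomial.X j)

/-- The zero-divisor `z_{j+1} = x_{j+1} ⊗ 1 + 1 ⊗ x_{j+1}` in `R(k,m) ⊗ R(k,m)`. -/
noncomputable def zGen (k m : ℕ) (j : Fin k) :
    FlagRing k m ⊗[ZMod 2] FlagRing k m :=
  xGen k m j ⊗ₜ 1 + 1 ⊗ₜ xGen k m j

/-- `x_{i+1,j+1}` in the `s`-fold tensor power `R(k,m)^{⊗ s}`: the element having
`x_{j+1}` in the `(i+1)`-st tensor factor and `1` elsewhere (`i`, `j` 0-indexed). -/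
noncomputable def xT (k m s : ℕ) (i : Fin s) (j : Fin k) :
    ⨂[ZMod 2] _ : Fin s, FlagRing k m :=
  PiTensorProduct.tprod (ZMod 2) (fun t => if t = i then xGen k m j else 1)

/-- The `s`-th zero-divisor `z_{i+1,j+1} = x_{1,j+1} + x_{i+1,j+1}` in `R(k,m)^{⊗ s}`. -/
noncomputable def zT (k m s : ℕ) (hs : 0 < s) (i : Fin s) (j : Fin k) :
    ⨂[ZMod 2] _ : Fin s, FlagRing k m :=
  xT k m s ⟨0, hs⟩ j + xT k m s i j

section CompleteHomog

variable {R : Type*} [CommSemiring R]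

/-- `∑ h_d(l) X^d = ∏ 1 / (1 - x X)`; this makes the symmetry of `h_d` in the list visible. -/
lemma mk_completeHomog (l : List R) :
    PowerSeries.mk (completeHomog l) =
      (l.map fun x => PowerSeries.mk fun n => x ^ n).prod := by
  induction l with
  | nil =>
    ext d
    cases d <;> simp [completeHomog, PowerSeries.coeff_one]
  | cons x l ih =>
    rw [List.map_cons, List.prod_cons, ← ih]
    ext d
    rw [PowerSeries.coeff_mul]
    simp [completeHomog, Finset.Nat.sum_antidiagonal_eq_sum_range_succ_mk]

lemma completeHomog_append_singleton (l : List R) (x : R) (d : ℕ) :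
    completeHomog (l ++ [x]) d =
      ∑ t ∈ Finset.range (d + 1), x ^ t * completeHomog l (d - t) := by
  have h : PowerSeries.mk (completeHomog (l ++ [x])) =
      PowerSeries.mk (completeHomog (x :: l)) := by
    rw [mk_completeHomog, mk_completeHomog]
    simp [mul_comm]
  simpa [completeHomog] using congrArg (PowerSeries.coeff d) h

lemma completeHomog_zero (l : List R) : completeHomog l 0 = 1 := by
  induction l with
  | nil => simp [completeHomog]
  | cons x l ih => simp [completeHomog, ih]

lemma map_completeHomog {S : Type*} [CommSemiring S] (f : R →+* S) (l : List R) (d : ℕ) :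
    f (completeHomog l d) = completeHomog (l.map f) d := by
  induction l generalizing d with
  | nil => cases d <;> simp [completeHomog]
  | cons x l ih => simp [completeHomog, ih]

end CompleteHomog

/-- The polynomial `h_d(l, X)` in one variable over the ring containing the entries of `l`. -/
noncomputable def lastPoly {T : Type*} [CommRing T] (l : List T) (d : ℕ) : Polynomial T :=
  completeHomog (l.map Polynomial.C ++ [Polynomial.X]) d

lemma lastPoly_degree_lt {T : Type*} [CommRing T] (l : List T) (d : ℕ) :
    ∃ p : Polynomial T, p.degree < d ∧ lastPoly l d = Polynomial.X ^ d + p := by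
  refine ⟨∑ t ∈ Finset.range d,
    Polynomial.X ^ t * Polynomial.C (completeHomog l (d - t)), ?_, ?_⟩
  · rw [← Polynomial.mem_degreeLT]
    refine Submodule.sum_mem _ fun t ht => ?_
    rw [Polynomial.mem_degreeLT, mul_comm]
    exact (Polynomial.degree_C_mul_X_pow_le _ _).trans_lt
      (by exact_mod_cast Finset.mem_range.1 ht)
  · rw [lastPoly, completeHomog_append_singleton, Finset.sum_range_succ, add_comm]
    simp [map_completeHomog, completeHomog_zero]

lemma lastPoly_monic {T : Type*} [CommRing T] (l : List T) (d : ℕ) : (lastPoly l d).Monic := by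
  obtain ⟨p, hp, h⟩ := lastPoly_degree_lt l d
  rw [h]
  exact Polynomial.monic_X_pow_add hp

lemma lastPoly_natDegree {T : Type*} [CommRing T] [Nontrivial T] (l : List T) (d : ℕ) :
    (lastPoly l d).natDegree = d := by
  obtain ⟨p, hp, h⟩ := lastPoly_degree_lt l d
  apply Polynomial.natDegree_eq_of_degree_eq_some
  rw [h, Polynomial.degree_add_eq_left_of_degree_lt (by simpa using hp), Polynomial.degree_X_pow]

lemma eval₂_lastPoly {T B : Type*} [CommRing T] [CommRing B] (f : T →+* B) (b : B)
    (l : List T) (d : ℕ) :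
    (lastPoly l d).eval₂ f b = completeHomog (l.map f ++ [b]) d := by
  rw [← Polynomial.coe_eval₂RingHom, lastPoly, map_completeHomog]
  simp [Function.comp_def]

/-- The exponent vectors of length `n` with `e j < N - j` for all `j`. -/
abbrev Expo (N n : ℕ) : Type := {e : Fin n → ℕ // ∀ j : Fin n, e j + j.val < N}

/-- Splitting off the last exponent. -/
noncomputable def expoEquiv (N n : ℕ) : Expo N n × Fin (N - n) ≃ Expo N (n + 1) :=
  (Equiv.ofBijective
    (fun e : Expo N (n + 1) =>
      ((⟨fun j => e.1 j.castSucc, fun j => e.2 j.castSucc⟩,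
        ⟨e.1 (Fin.last n), by have := e.2 (Fin.last n); simp at this; omega⟩) :
          Expo N n × Fin (N - n))) (by
    constructor
    · rintro ⟨e, he⟩ ⟨e', he'⟩ h
      simp only [Prod.mk.injEq, Subtype.mk.injEq, Fin.mk.injEq] at h
      ext j
      induction j using Fin.lastCases with
      | last => exact h.2
      | cast j => exact congrFun h.1 j
    · rintro ⟨⟨e, he⟩, ⟨i, hi⟩⟩
      refine ⟨⟨Fin.snoc e i, fun j => ?_⟩, ?_⟩
      · induction j using Fin.lastCases with
        | last => simp; omega
        | cast j => simpa using he j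
      · simp)).symm

lemma expoEquiv_symm_apply (N n : ℕ) (e : Expo N (n + 1)) :
    (∀ j, ((expoEquiv N n).symm e).1.1 j = e.1 j.castSucc) ∧
      (((expoEquiv N n).symm e).2 : ℕ) = e.1 (Fin.last n) :=
  ⟨fun _ => rfl, rfl⟩

/-- The elements `b 0, …, b (n - 1)` satisfy the relations `h_{N-j}(b_0, …, b_j) = 0`, `j < n`. -/
def FlagRel {B : Type*} [CommRing B] (N n : ℕ) (b : ℕ → B) : Prop :=
  ∀ j < n, completeHomog ((List.range (j + 1)).map b) (N - j) = 0

/-- The universal algebra on `n` generators `t 0, …, t (n - 1)` subject to `FlagRel N n`, with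
its monomial basis, built by adjoining one root at a time. Only the first `n` values of the
sequences `t` and `b` matter. -/
lemma exists_tower (K : Type) [Field K] (N n : ℕ) (hn : n ≤ N) :
    ∃ (T : Type) (_ : CommRing T) (_ : Algebra K T) (t : ℕ → T), FlagRel N n t ∧
      (∃ β : Module.Basis (Expo N n) K T, ∀ e, β e = ∏ j : Fin n, t j ^ e.1 j) ∧
      ∀ (B : Type) [CommRing B] [Algebra K B] (b : ℕ → B), FlagRel N n b →
        ∃ φ : T →ₐ[K] B, ∀ j < n, φ (t j) = b j := by
  induction n with
  | zero =>
    have : Unique (Expo N 0) :=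
      { default := ⟨Fin.elim0, fun j => j.elim0⟩
        uniq := fun e => Subtype.ext (funext fun j => j.elim0) }
    refine ⟨K, inferInstance, inferInstance, fun _ => 0, fun j hj => absurd hj (by omega),
      ⟨Module.Basis.singleton _ K, fun e => by simp⟩, fun B _ _ b _ =>
      ⟨Algebra.ofId K B, fun j hj => absurd hj (by omega)⟩⟩
  | succ n ih =>
    obtain ⟨T, _, _, t, ht, ⟨β, hβ⟩, hT⟩ := ih (by omega)
    have : Nontrivial T :=
      ⟨⟨β ⟨fun _ => 0, fun j => by have := j.2; show 0 + j.1 < N; omega⟩, 0, β.ne_zero _⟩⟩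
    set l := (List.range n).map t with hl
    set g := lastPoly l (N - n) with hg
    have hgm : g.Monic := lastPoly_monic _ _
    have hgd : g.natDegree = N - n := lastPoly_natDegree _ _
    set t' : ℕ → AdjoinRoot g :=
      Function.update (fun j => AdjoinRoot.of g (t j)) n (AdjoinRoot.root g) with ht'
    have ht'n : t' n = AdjoinRoot.root g := by simp [ht']
    have ht'lt : ∀ j < n, t' j = AdjoinRoot.of g (t j) := fun j hj => by
      simp [ht', Function.update_of_ne hj.ne]
    have hmap : ∀ j ≤ n, (List.range j).map t' =
        ((List.range j).map t).map (AdjoinRoot.of g) := fun j hj => by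
      rw [List.map_map]
      refine List.map_congr_left fun i hi => ht'lt i ?_
      have := List.mem_range.1 hi
      omega
    refine ⟨AdjoinRoot g, inferInstance, inferInstance, t', ?_, ?_, ?_⟩
    · intro j hj
      rcases Nat.lt_succ_iff_lt_or_eq.1 hj with hj | rfl
      · rw [hmap _ hj, ← map_completeHomog, ht j hj, map_zero]
      · rw [List.range_succ, List.map_append, hmap _ le_rfl, List.map_singleton, ht'n,
          ← eval₂_lastPoly]
        exact AdjoinRoot.eval₂_root g
    · refine ⟨(β.smulTower ((AdjoinRoot.powerBasis' hgm).basis.reindex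
        (finCongr hgd))).reindex (expoEquiv N n), fun e => ?_⟩
      obtain ⟨h₁, h₂⟩ := expoEquiv_symm_apply N n e
      rw [Module.Basis.reindex_apply, Module.Basis.smulTower_apply, Module.Basis.reindex_apply,
        PowerBasis.basis_eq_pow, hβ, Fin.prod_univ_castSucc, Algebra.smul_def,
        AdjoinRoot.algebraMap_eq, map_prod]
      congr 1
      · refine Finset.prod_congr rfl fun j _ => ?_
        rw [Fin.val_castSucc, ht'lt _ j.2, map_pow, h₁]
      · rw [Fin.val_last, ht'n, ← h₂]
        rfl
    · intro B _ _ b hb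
      obtain ⟨φ, hφ⟩ := hT B b fun j hj => hb j (by omega)
      have hroot : g.eval₂ (φ : T →+* B) (b n) = 0 := by
        rw [hg, eval₂_lastPoly]
        have h := hb n (by omega)
        rw [List.range_succ, List.map_append, List.map_singleton] at h
        rw [← h, hl, List.map_map]
        congr 2
        exact List.map_congr_left fun i hi => hφ i (List.mem_range.1 hi)
      refine ⟨AdjoinRoot.liftAlgHom g φ (b n) hroot, fun j hj => ?_⟩
      rcases Nat.lt_succ_iff_lt_or_eq.1 hj with hj | rfl
      · rw [ht'lt j hj, AdjoinRoot.liftAlgHom_of, hφ j hj]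
      · rw [ht'n, AdjoinRoot.liftAlgHom_root]

/-- The first `j` variables, listed through any sequence `b` extending `x`. -/
lemma map_take_finRange {B : Type*} (k j : ℕ) (hj : j ≤ k) (x : Fin k → B) (b : ℕ → B)
    (hb : ∀ i : Fin k, b i = x i) :
    ((List.finRange k).take j).map x = (List.range j).map b := by
  apply List.ext_getElem
  · simp [hj]
  · intro i h₁ h₂
    simp [← hb]

/-- the images in `R(k,m)` of the monomials `x_1^{n_1} ⋯ x_k^{n_k}` with
`0 ≤ n_i ≤ m + k - i` form a `ZMod 2`-basis of `R(k,m)`: they are linearly independent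
and span. (The bound `n_i ≤ m + k - i`, with `i` 1-indexed, reads `n j + j.val < m + k`
for the 0-indexed `j`.) -/
theorem statement0 (k m : ℕ) (hk : 0 < k) (hm : 0 < m) :
    LinearIndependent (ZMod 2)
      (fun n : {n : Fin k → ℕ // ∀ j : Fin k, n j + j.val < m + k} =>
        ∏ j : Fin k, xGen k m j ^ n.val j) ∧
    Submodule.span (ZMod 2)
      (Set.range (fun n : {n : Fin k → ℕ // ∀ j : Fin k, n j + j.val < m + k} =>
        ∏ j : Fin k, xGen k m j ^ n.val j)) = ⊤ := by
  obtain ⟨T, _, _, t, ht, ⟨β, hβ⟩, hT⟩ := exists_tower (ZMod 2) (m + k) k (by omega)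
  constructor
  -- The generators vanish on `t`, so `x_j ↦ t_j` factors through `FlagRing k m`.
  · have hker : ∀ p ∈ flagIdeal k m,
        MvPolynomial.aeval (R := ZMod 2) (fun j : Fin k => t j) p = 0 := by
      intro p hp
      rw [← RingHom.mem_ker]
      refine (Ideal.span_le (I := RingHom.ker
        (MvPolynomial.aeval (R := ZMod 2) (fun j : Fin k => t j)))).2 ?_ hp
      rintro _ ⟨i, hi₁, hi₂, rfl⟩
      rw [SetLike.mem_coe, RingHom.mem_ker, ← RingHom.coe_coe, map_completeHomog, List.map_map,
        map_take_finRange k _ (by omega) _ t (by simp)]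
      have h := ht (k - i) (by omega)
      rwa [show k - i + 1 = k + 1 - i by omega, show m + k - (k - i) = m + i by omega] at h
    let φ : FlagRing k m →ₐ[ZMod 2] T := Ideal.Quotient.liftₐ _ (MvPolynomial.aeval _) hker
    have hφ : ∀ j, φ (xGen k m j) = t j := fun j =>
      (Ideal.Quotient.lift_mk _ _ _).trans (MvPolynomial.aeval_X _ j)
    refine LinearIndependent.of_comp φ.toLinearMap ?_
    convert β.linearIndependent using 1
    ext e
    simp [hβ, hφ]
  · let b : ℕ → FlagRing k m := fun j => if h : j < k then xGen k m ⟨j, h⟩ else 0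
    have hbx : ∀ j : Fin k, b j = xGen k m j := fun j => by simp [b]
    have hb : FlagRel (m + k) k b := by
      intro j hj
      rw [← map_take_finRange k (j + 1) hj (xGen k m) b hbx]
      have h : Ideal.Quotient.mk (flagIdeal k m)
          (completeHomog (((List.finRange k).take (j + 1)).map MvPolynomial.X) (m + k - j)) = 0 :=
        Ideal.Quotient.eq_zero_iff_mem.2 (Ideal.subset_span ⟨k - j, by omega, by omega, by
          rw [show k + 1 - (k - j) = j + 1 by omega, show m + (k - j) = m + k - j by omega]⟩)
      rw [map_completeHomog, List.map_map] at h
      exact h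
    obtain ⟨φ, hφ⟩ := hT _ b hb
    have hsurj : Function.Surjective φ := by
      rw [← AlgHom.range_eq_top, eq_top_iff]
      rintro y -
      obtain ⟨p, rfl⟩ := Ideal.Quotient.mk_surjective y
      induction p using MvPolynomial.induction_on with
      | C a => exact φ.range.algebraMap_mem a
      | add p q hp hq => rw [map_add]; exact add_mem hp hq
      | mul_X p j hp =>
        rw [map_mul]
        exact mul_mem hp ⟨t j, (hφ j j.2).trans (hbx j)⟩
    have hrange : Set.range (fun n : {n : Fin k → ℕ // ∀ j : Fin k, n j + j.val < m + k} =>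
        ∏ j : Fin k, xGen k m j ^ n.val j) = φ.toLinearMap '' Set.range β := by
      rw [← Set.range_comp]
      congr 1
      ext e
      simp [hβ, hφ, hbx]
    rw [hrange, Submodule.span_image, β.span_eq, Submodule.map_top, LinearMap.range_eq_top]
    exact hsurj
end

section
/- Let e ≥ 1 be an integer. In the tensor product R(2,2^e−1) ⊗ R(2,2^e−1) over ZMod 2, one has the explicit identity z_1^{2^{e+1}−1}·z_2^{2^{e+1}−2} = λ_1^{2^e}·λ_2^{2^e−2}·ρ_1^{2^e}·ρ_2^{2^e−1} + λ_1^{2^e}·λ_2^{2^e−1}·ρ_1^{2^e}·ρ_2^{2^e−2}, and consequently (z_1·z_2)^{2^{e+1}−1} = 0 in R(2,2^e−1) ⊗ R(2,2^e−1). -/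
/-!
Write `q = 2 ^ e`. The two relations of `R(2, q - 1)` are `h_q(x₁, x₂) = 0` and `x₁ ^ (q + 1) = 0`.
Multiplying the first by `x₁ - x₂`, by `x₁ ^ q` and by `x₁ ^ (q - 1)` gives respectively
`x₂ ^ (q + 1) = 0`, `x₁ ^ q * x₂ ^ q = 0` and `x₁ ^ (q - 1) * x₂ ^ q = - x₁ ^ q * x₂ ^ (q - 1)`
(`FlagRel`, `FlagRel.of_homog`).

In characteristic two `(x + y) ^ q = x ^ q + y ^ q`, and if `x ^ (q + 1) = y ^ (q + 1) = 0` then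
`x ^ q * (x + y) ^ j = x ^ q * y ^ j` and symmetrically, so
`(x + y) ^ (q + j) = x ^ q * y ^ j + y ^ q * x ^ j` (`add_pow_q_add`). Applying this to `z₁` with
`j = q - 1` and to `z₂` with `j = q - 2`, two of the four terms of the product contain
`x₁ ^ q * x₂ ^ q = 0` in one tensor factor, and the other two become the claimed ones by the last
relation. After a further multiplication by `z₂`, two of the four terms again contain
`x₁ ^ q * x₂ ^ q` in one factor, and the other two coincide, so the result is zero.
-/

open scoped TensorProduct

/-- The relations, in terms of `q = n + 2`, satisfied by the generators `a = x₁` and `b = x₂` of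
`R(2, q - 1)`, for a pair of elements of any commutative ring. -/
structure FlagRel_s9 {S : Type*} [CommRing S] (n : ℕ) (a b : S) : Prop where
  pow_left : a ^ (n + 3) = 0
  pow_right : b ^ (n + 3) = 0
  top : a ^ (n + 2) * b ^ (n + 2) = 0
  swap : a ^ (n + 1) * b ^ (n + 2) = - (a ^ (n + 2) * b ^ (n + 1))

theorem FlagRel_s9.of_homog {S : Type*} [CommRing S] {n : ℕ} {a b : S} (ha : a ^ (n + 3) = 0)
    (h : ∑ t ∈ Finset.range (n + 3), a ^ t * b ^ (n + 2 - t) = 0) : FlagRel_s9 n a b := by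
  have ha' : ∀ t, a ^ (n + 3 + t) = 0 := fun t => by rw [pow_add, ha, zero_mul]
  refine ⟨ha, ?_, ?_, ?_⟩
  · have := (Commute.all a b).geom_sum₂_mul (n + 3)
    simp only [show n + 3 - 1 = n + 2 from rfl, h, ha] at this
    simpa using this.symm
  · have h2 := congrArg (a ^ (n + 2) * ·) h
    simp only [Finset.sum_range_succ', Finset.mul_sum, mul_add, mul_zero, ← mul_assoc,
      ← pow_add] at h2
    rw [Finset.sum_eq_zero] at h2
    · simpa [ha, show a ^ (n + 2 + 2) = 0 from ha' 1] using h2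
    · intro t _
      rw [show n + 2 + (t + 1 + 1 + 1) = n + 3 + (t + 2) by ring, ha', zero_mul]
  · have h2 := congrArg (a ^ (n + 1) * ·) h
    simp only [Finset.sum_range_succ', Finset.mul_sum, mul_add, mul_zero, ← mul_assoc,
      ← pow_add] at h2
    rw [Finset.sum_eq_zero] at h2
    · simp only [zero_add, add_zero, Nat.sub_zero] at h2
      rw [eq_neg_iff_add_eq_zero, add_comm]
      simpa [show a ^ (n + 1 + 2) = 0 from ha] using h2
    · intro t _
      rw [show n + 1 + (t + 1 + 1 + 1) = n + 3 + (t + 1) by ring, ha', zero_mul]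

theorem FlagRel_s9.map {S T : Type*} [CommRing S] [CommRing T] {n : ℕ} {a b : S}
    (h : FlagRel_s9 n a b) (f : S →+* T) : FlagRel_s9 n (f a) (f b) := by
  refine ⟨?_, ?_, ?_, ?_⟩
  · rw [← map_pow, h.pow_left, map_zero]
  · rw [← map_pow, h.pow_right, map_zero]
  · rw [← map_pow, ← map_pow, ← map_mul, h.top, map_zero]
  · simp only [← map_pow, ← map_mul, ← map_neg, h.swap]

theorem mul_add_pow_of_mul_eq_zero {S : Type*} [CommRing S] {w x : S} (h : w * x = 0) (y : S)
    (j : ℕ) : w * (x + y) ^ j = w * y ^ j := by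
  induction j with
  | zero => simp
  | succ j ih => linear_combination (x + y) * ih + y ^ j * h

theorem add_pow_q_add {S : Type*} [CommRing S] [CharP S 2] (e : ℕ) {x y : S}
    (hx : x ^ (2 ^ e + 1) = 0) (hy : y ^ (2 ^ e + 1) = 0) (j : ℕ) :
    (x + y) ^ (2 ^ e + j) = x ^ 2 ^ e * y ^ j + y ^ 2 ^ e * x ^ j := by
  rw [pow_succ] at hx hy
  rw [pow_add, add_pow_char_pow, add_mul, mul_add_pow_of_mul_eq_zero hx, add_comm x y,
    mul_add_pow_of_mul_eq_zero hy]

/-- The two identities of the theorem, with `λ₁, λ₂, ρ₁, ρ₂` replaced by `a, b, c, d` in an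
arbitrary commutative ring of characteristic two. -/
theorem FlagRel_s9.identities {S : Type*} [CommRing S] [CharP S 2] {e n : ℕ} (hn : 2 ^ e = n + 2)
    {a b c d : S} (h₁ : FlagRel_s9 n a b) (h₂ : FlagRel_s9 n c d) :
    (a + c) ^ (2 * n + 3) * (b + d) ^ (2 * n + 2) =
        a ^ (n + 2) * b ^ n * c ^ (n + 2) * d ^ (n + 1) +
          a ^ (n + 2) * b ^ (n + 1) * c ^ (n + 2) * d ^ n ∧
      ((a + c) * (b + d)) ^ (2 * n + 3) = 0 := by
  have two : (2 : S) = 0 := CharTwo.two_eq_zero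
  have hz₁ := add_pow_q_add e (x := a) (y := c) (by rw [hn]; exact h₁.pow_left)
    (by rw [hn]; exact h₂.pow_left) (n + 1)
  have hz₂ := add_pow_q_add e (x := b) (y := d) (by rw [hn]; exact h₁.pow_right)
    (by rw [hn]; exact h₂.pow_right) n
  rw [hn, show n + 2 + (n + 1) = 2 * n + 3 by ring] at hz₁
  rw [hn, show n + 2 + n = 2 * n + 2 by ring] at hz₂
  have key : (a + c) ^ (2 * n + 3) * (b + d) ^ (2 * n + 2) =
      a ^ (n + 2) * b ^ n * c ^ (n + 2) * d ^ (n + 1) +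
        a ^ (n + 2) * b ^ (n + 1) * c ^ (n + 2) * d ^ n := by
    rw [hz₁, hz₂]
    linear_combination (c ^ (n + 1) * d ^ n) * h₁.top + (c ^ (n + 2) * d ^ n) * h₁.swap +
      (a ^ (n + 1) * b ^ n) * h₂.top + (a ^ (n + 2) * b ^ n) * h₂.swap -
      (a ^ (n + 2) * b ^ n * c ^ (n + 2) * d ^ (n + 1) +
        a ^ (n + 2) * b ^ (n + 1) * c ^ (n + 2) * d ^ n) * two
  refine ⟨key, ?_⟩
  rw [mul_pow]
  linear_combination (b + d) * key + (c ^ (n + 2) * d ^ n) * h₁.top +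
    (a ^ (n + 2) * b ^ n) * h₂.top +
    (a ^ (n + 2) * b ^ (n + 1) * c ^ (n + 2) * d ^ (n + 1)) * two

theorem FlagRel_s9.tensor_identities {A : Type*} [CommRing A] [Algebra (ZMod 2) A] {e n : ℕ}
    (hn : 2 ^ e = n + 2) {a b : A} (h : FlagRel_s9 n a b) :
    (a ⊗ₜ[ZMod 2] (1 : A) + (1 : A) ⊗ₜ[ZMod 2] a) ^ (2 * n + 3) *
          (b ⊗ₜ[ZMod 2] (1 : A) + (1 : A) ⊗ₜ[ZMod 2] b) ^ (2 * n + 2) =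
        (a ⊗ₜ[ZMod 2] (1 : A)) ^ (n + 2) * (b ⊗ₜ[ZMod 2] (1 : A)) ^ n *
            ((1 : A) ⊗ₜ[ZMod 2] a) ^ (n + 2) * ((1 : A) ⊗ₜ[ZMod 2] b) ^ (n + 1) +
          (a ⊗ₜ[ZMod 2] (1 : A)) ^ (n + 2) * (b ⊗ₜ[ZMod 2] (1 : A)) ^ (n + 1) *
            ((1 : A) ⊗ₜ[ZMod 2] a) ^ (n + 2) * ((1 : A) ⊗ₜ[ZMod 2] b) ^ n ∧
      ((a ⊗ₜ[ZMod 2] (1 : A) + (1 : A) ⊗ₜ[ZMod 2] a) *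
        (b ⊗ₜ[ZMod 2] (1 : A) + (1 : A) ⊗ₜ[ZMod 2] b)) ^ (2 * n + 3) = 0 := by
  -- If the tensor square is trivial there is nothing to show; otherwise it has characteristic two.
  rcases subsingleton_or_nontrivial (A ⊗[ZMod 2] A) with hS | hS
  · exact ⟨Subsingleton.elim _ _, Subsingleton.elim _ _⟩
  · have : CharP (A ⊗[ZMod 2] A) 2 :=
      charP_of_injective_algebraMap (algebraMap (ZMod 2) _).injective 2
    exact FlagRel_s9.identities hn
      (h.map (T := A ⊗[ZMod 2] A)
        (Algebra.TensorProduct.includeLeft (R := ZMod 2) (S := ZMod 2) (A := A) (B := A)).toRingHom)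
      (h.map (T := A ⊗[ZMod 2] A)
        (Algebra.TensorProduct.includeRight (R := ZMod 2) (A := A) (B := A)).toRingHom)

theorem completeHomog_singleton {R : Type*} [CommSemiring R] (x : R) (d : ℕ) :
    completeHomog [x] d = x ^ d := by
  rw [completeHomog, Finset.sum_range_succ, Finset.sum_eq_zero]
  · simp [completeHomog]
  · intro t ht
    obtain ⟨s, hs⟩ : ∃ s, d - t = s + 1 := ⟨d - t - 1, by have := Finset.mem_range.1 ht; omega⟩
    rw [hs, completeHomog, mul_zero]

theorem completeHomog_pair {R : Type*} [CommSemiring R] (x y : R) (d : ℕ) :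
    completeHomog [x, y] d = ∑ t ∈ Finset.range (d + 1), x ^ t * y ^ (d - t) := by
  rw [completeHomog]
  simp only [completeHomog_singleton]

theorem flagRel_xGen (n : ℕ) : FlagRel_s9 n (xGen 2 (n + 1) 0) (xGen 2 (n + 1) 1) := by
  apply FlagRel_s9.of_homog
  · have : completeHomog [(MvPolynomial.X 0 : MvPolynomial (Fin 2) (ZMod 2))] (n + 1 + 2) ∈
        flagIdeal 2 (n + 1) := Ideal.subset_span ⟨2, by norm_num, le_rfl, rfl⟩
    rw [completeHomog_singleton] at this
    simpa only [xGen, map_pow] using Ideal.Quotient.eq_zero_iff_mem.2 this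
  · have : completeHomog [(MvPolynomial.X 0 : MvPolynomial (Fin 2) (ZMod 2)), MvPolynomial.X 1]
        (n + 1 + 1) ∈ flagIdeal 2 (n + 1) :=
      Ideal.subset_span ⟨1, le_rfl, by norm_num, rfl⟩
    rw [completeHomog_pair] at this
    simpa only [xGen, map_pow, map_mul, map_sum] using Ideal.Quotient.eq_zero_iff_mem.2 this

/-- for `e ≥ 1`, in `R(2, 2^e-1) ⊗ R(2, 2^e-1)` one has the identity
`z_1^{2^{e+1}-1} z_2^{2^{e+1}-2}
  = λ_1^{2^e} λ_2^{2^e-2} ρ_1^{2^e} ρ_2^{2^e-1} + λ_1^{2^e} λ_2^{2^e-1} ρ_1^{2^e} ρ_2^{2^e-2}`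
(where `λ_i = x_i ⊗ 1`, `ρ_i = 1 ⊗ x_i`), and consequently `(z_1 z_2)^{2^{e+1}-1} = 0`. -/
theorem statement9 (e : ℕ) (he : 1 ≤ e) :
    (zGen 2 (2 ^ e - 1) 0 ^ (2 ^ (e + 1) - 1) * zGen 2 (2 ^ e - 1) 1 ^ (2 ^ (e + 1) - 2) =
      (xGen 2 (2 ^ e - 1) 0 ⊗ₜ[ZMod 2] (1 : FlagRing 2 (2 ^ e - 1))) ^ (2 ^ e) *
        (xGen 2 (2 ^ e - 1) 1 ⊗ₜ[ZMod 2] (1 : FlagRing 2 (2 ^ e - 1))) ^ (2 ^ e - 2) *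
        ((1 : FlagRing 2 (2 ^ e - 1)) ⊗ₜ[ZMod 2] xGen 2 (2 ^ e - 1) 0) ^ (2 ^ e) *
        ((1 : FlagRing 2 (2 ^ e - 1)) ⊗ₜ[ZMod 2] xGen 2 (2 ^ e - 1) 1) ^ (2 ^ e - 1) +
      (xGen 2 (2 ^ e - 1) 0 ⊗ₜ[ZMod 2] (1 : FlagRing 2 (2 ^ e - 1))) ^ (2 ^ e) *
        (xGen 2 (2 ^ e - 1) 1 ⊗ₜ[ZMod 2] (1 : FlagRing 2 (2 ^ e - 1))) ^ (2 ^ e - 1) *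
        ((1 : FlagRing 2 (2 ^ e - 1)) ⊗ₜ[ZMod 2] xGen 2 (2 ^ e - 1) 0) ^ (2 ^ e) *
        ((1 : FlagRing 2 (2 ^ e - 1)) ⊗ₜ[ZMod 2] xGen 2 (2 ^ e - 1) 1) ^ (2 ^ e - 2)) ∧
    (zGen 2 (2 ^ e - 1) 0 * zGen 2 (2 ^ e - 1) 1) ^ (2 ^ (e + 1) - 1) = 0 := by
  obtain ⟨n, hn⟩ : ∃ n, 2 ^ e = n + 2 := by
    have := Nat.pow_le_pow_right (n := 2) (by norm_num) he
    exact ⟨2 ^ e - 2, by omega⟩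
  have e1 : 2 ^ (e + 1) - 1 = 2 * n + 3 := by rw [pow_succ]; omega
  have e2 : 2 ^ (e + 1) - 2 = 2 * n + 2 := by rw [pow_succ]; omega
  rw [e1, e2, hn, show n + 2 - 1 = n + 1 from rfl, show n + 2 - 2 = n from rfl]
  exact (flagRel_xGen n).tensor_identities hn
end
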